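/- Let 𝒞 ⊆ {+1,−1}^𝒳 be a nonempty concept class with VC dimension at most 1, i.e., no two-element subset of 𝒳 is shattered by 𝒞. Then there exists a (3, 1, 1)-good function for (𝒞, 𝒳). -/

import Mathlib

/-! Basic notions for learning with a concept class `C ⊆ {+1,−1}^𝒳`.  Labeled examples are
pairs in `𝒳 × ℤ` (with labels `±1`). -/

variable {X : Type*}

/-- `h` is consistent with a set of labeled examples. -/
def Consistent (h : X → ℤ) (S : Set (X × ℤ)) : Prop := ∀ p ∈ S, h p.1 = p.2

/-- The version space `𝒱(S)` of hypotheses in `C` consistent with `S`. -/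
def VSpace (C : Set (X → ℤ)) (S : Set (X × ℤ)) : Set (X → ℤ) := {h ∈ C | Consistent h S}

/-- The restriction `V_{x→y}`. -/
def Restrict (V : Set (X → ℤ)) (x : X) (y : ℤ) : Set (X → ℤ) := {h ∈ V | h x = y}

/-- A labeled example `(x,y)` is realizable in `V` if `V_{x→y} ≠ ∅`. -/
def RealizableIn (V : Set (X → ℤ)) (x : X) (y : ℤ) : Prop := (Restrict V x y).Nonempty

/-- `V` is a version space for `C`. -/
def IsVersionSpace (C : Set (X → ℤ)) (V : Set (X → ℤ)) : Prop :=
  ∃ S : Set (X × ℤ), V = VSpace C S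

/-- Monotonicity of a score function `f` on size-`k` labeled sets: restricting a version
space consistent with `U` by a labeled example jointly realizable with `U` can only
decrease the score. -/
def MonotoneScore (C : Set (X → ℤ)) (k : ℕ) (f : Finset (X × ℤ) → Set (X → ℤ) → ℝ) : Prop :=
  ∀ U : Finset (X × ℤ), U.card = k → ∀ V : Set (X → ℤ), IsVersionSpace C V →
    (∃ h ∈ V, Consistent h ↑U) →
    ∀ x : X, ∀ y : ℤ, (∃ h ∈ V, Consistent h (insert (x, y) (↑U : Set (X × ℤ)))) →
      f U (Restrict V x y) ≤ f U V

/-- `m`-robustness of a score function `f`: in every size-`m` set `M` labeled by some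
`h ∈ C` there are a size-`k` subset `U ⊆ M` and a witness `p ∈ M ∖ U` such that for every
set `A` of labeled examples labeled by `h` with `A ⊇ M ∖ (U ∪ {p})`, flipping the label of
the witness either drops the score of `U` by at least `1`, or makes `U` unrealizable. -/
def RobustScore [DecidableEq X] (C : Set (X → ℤ)) (m k : ℕ)
    (f : Finset (X × ℤ) → Set (X → ℤ) → ℝ) : Prop :=
  ∀ h ∈ C, ∀ M : Finset (X × ℤ), M.card = m → Consistent h ↑M →
    ∃ U ⊆ M, U.card = k ∧ ∃ p ∈ M, p ∉ U ∧
      ∀ A : Set (X × ℤ), Consistent h A → ↑(M \ insert p U) ⊆ A →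
        (1 ≤ f U (VSpace C A) - f U (Restrict (VSpace C A) p.1 (-p.2)) ∨
          ¬ ∃ h' ∈ Restrict (VSpace C A) p.1 (-p.2), Consistent h' ↑U)

/-- `f` is an `(m,c,k)`-good function for `(C, 𝒳)`: it maps size-`k` labeled sets and
version spaces into `[0, c]`, is monotone, and is `m`-robust. -/
def IsGood [DecidableEq X] (C : Set (X → ℤ)) (m : ℕ) (c : ℝ) (k : ℕ)
    (f : Finset (X × ℤ) → Set (X → ℤ) → ℝ) : Prop :=
  (∀ U : Finset (X × ℤ), U.card = k → ∀ V : Set (X → ℤ), 0 ≤ f U V ∧ f U V ≤ c) ∧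
  MonotoneScore C k f ∧ RobustScore C m k f

/-- The leave-`k`-out potential `ρ_f(S) = Σ_{U ⊆ S, |U| = k} f(U; 𝒱(S ∖ U))`. -/
def pot [DecidableEq X] (C : Set (X → ℤ)) (k : ℕ)
    (f : Finset (X × ℤ) → Set (X → ℤ) → ℝ) (S : Finset (X × ℤ)) : ℝ :=
  ∑ U ∈ S.powersetCard k, f U (VSpace C ↑(S \ U))

open scoped Classical

/-- A finite set `A ⊆ 𝒳` is shattered by `C` if every `±1`-labeling of `A` is realized by
some hypothesis in `C`. -/
def Shatters {X : Type*} (C : Set (X → ℤ)) (A : Finset X) : Prop :=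
  ∀ τ : X → ℤ, (∀ a ∈ A, τ a = 1 ∨ τ a = -1) → ∃ h ∈ C, ∀ a ∈ A, h a = τ a

/-! Fix `h₀ ∈ C`. When no two points are shattered, the points at which a hypothesis deviates
from `h₀` form a chain for the order "every deviation at `x` entails a deviation at `s`", so `C`
looks like a family of paths from the root of a tree. The score of `(x, y)` against `V` is `1` if
every deviation that `V` forces lies on the path to `x`, and `0` otherwise. Among three points, two
lie on the same side: `h` deviates at both or at neither. If they are comparable, flipping the
label of one of them makes the other unrealizable. If they are not, `h` agrees with `h₀` at both,
and the one whose path shares the longer part with the deviations of `h` has score `1`, which drops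
to `0` when the label of the other is flipped, unless that makes it unrealizable. -/

section DeviationOrder

variable {Y : Type*} {C : Set (X → Y)} {h₀ : X → Y}

/-- The tree preorder of the class `C` rooted at `h₀`: `s` lies below `x` if every hypothesis of
`C` that deviates from `h₀` at `x` also deviates from it at `s`. -/
def DeviationLe (C : Set (X → Y)) (h₀ : X → Y) (s x : X) : Prop :=
  ∀ h ∈ C, h x ≠ h₀ x → h s ≠ h₀ s

instance : Std.Refl (DeviationLe C h₀) :=
  ⟨fun _ _ _ hx => hx⟩

instance : IsTrans X (DeviationLe C h₀) :=
  ⟨fun _ _ _ hst htx h hh hx => hst h hh (htx h hh hx)⟩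

end DeviationOrder

section Nested

variable {α : Type*} {r : α → α → Prop} [Std.Refl r] [IsTrans α r] {K : Set α}

theorem isChain_initialSegments_nested (hK : IsChain r K) (x y : α) :
    (∀ s ∈ K, r s x → r s y) ∨ (∀ s ∈ K, r s y → r s x) := by
  by_contra! ⟨⟨s, hs, hsx, hsy⟩, t, ht, hty, htx⟩
  rcases hK.total hs ht with hst | hts
  · exact hsy (_root_.trans hst hty)
  · exact htx (_root_.trans hts hsx)

end Nested

section ForcedDeviations

variable {Y : Type*} {C V W : Set (X → Y)} {h₀ : X → Y} {x : X}

/-- The points at which every hypothesis of `V` deviates from `h₀`. For a nonempty version space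
this is the part of the tree path that all its members are known to share. -/
def forcedDeviations (h₀ : X → Y) (V : Set (X → Y)) : Set X :=
  {s | ∀ h ∈ V, h s ≠ h₀ s}

/-- Every deviation from `h₀` forced by `V` lies below `x` in the tree preorder of `C`; the score
of a labeled example at `x` is the indicator of this condition. -/
def ForcedBelow (C : Set (X → Y)) (h₀ : X → Y) (V : Set (X → Y)) (x : X) : Prop :=
  ∀ s ∈ forcedDeviations h₀ V, DeviationLe C h₀ s x

theorem ForcedBelow.mono (hWV : W ⊆ V) (hW : ForcedBelow C h₀ W x) : ForcedBelow C h₀ V x :=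
  fun s hs => hW s fun h hh => hs h (hWV hh)

end ForcedDeviations

section ForcedScore

variable {C V W : Set (X → ℤ)} {h₀ : X → ℤ} {U : Finset (X × ℤ)}

/-- The score witnessing goodness: `1` if every deviation forced by `V` lies below every point
of `U`, and `0` otherwise. The labels of `U` play no part in it. -/
noncomputable def forcedScore (C : Set (X → ℤ)) (h₀ : X → ℤ) (U : Finset (X × ℤ))
    (V : Set (X → ℤ)) : ℝ :=
  if ∀ p ∈ U, ForcedBelow C h₀ V p.1 then 1 else 0

theorem forcedScore_nonneg : 0 ≤ forcedScore C h₀ U V := by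
  unfold forcedScore; split_ifs <;> norm_num

theorem forcedScore_le_one : forcedScore C h₀ U V ≤ 1 := by
  unfold forcedScore; split_ifs <;> norm_num

theorem forcedScore_mono (hWV : W ⊆ V) : forcedScore C h₀ U W ≤ forcedScore C h₀ U V := by
  by_cases hW : ∀ p ∈ U, ForcedBelow C h₀ W p.1
  · have hV : ∀ p ∈ U, ForcedBelow C h₀ V p.1 := fun p hp => (hW p hp).mono hWV
    rw [forcedScore, forcedScore, if_pos hW, if_pos hV]
  · rw [forcedScore, if_neg hW]
    exact forcedScore_nonneg

theorem forcedScore_singleton (q : X × ℤ) :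
    forcedScore C h₀ {q} V = if ForcedBelow C h₀ V q.1 then 1 else 0 := by
  simp only [forcedScore, Finset.mem_singleton, forall_eq]

theorem monotoneScore_forcedScore (C : Set (X → ℤ)) (h₀ : X → ℤ) (k : ℕ) :
    MonotoneScore C k (forcedScore C h₀) :=
  fun _ _ _ _ _ _ _ _ => forcedScore_mono fun _ hh => hh.1

end ForcedScore

section Chain

variable {C : Set (X → ℤ)} {h₀ : X → ℤ}

theorem shatters_pair_of_agreement_patterns (hC : ∀ h ∈ C, ∀ x, h x = 1 ∨ h x = -1)
    (hh₀ : h₀ ∈ C) {s x : X}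
    (hpat : ∀ P Q : Prop, ∃ h ∈ C, (h s = h₀ s ↔ P) ∧ (h x = h₀ x ↔ Q)) :
    Shatters C {s, x} := by
  have eq_of_agree_iff {g : X → ℤ} (hg : g ∈ C) {t : X} {l : ℤ} (hl : l = 1 ∨ l = -1)
      (hiff : g t = h₀ t ↔ l = h₀ t) : g t = l := by
    have := hC g hg t
    have := hC h₀ hh₀ t
    omega
  intro τ hτ
  obtain ⟨g, hg, hgs, hgx⟩ := hpat (τ s = h₀ s) (τ x = h₀ x)
  refine ⟨g, hg, fun a ha => ?_⟩
  have hτa := hτ a ha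
  obtain rfl | rfl := Finset.mem_insert.1 ha |>.imp_right Finset.mem_singleton.1
  · exact eq_of_agree_iff hg hτa hgs
  · exact eq_of_agree_iff hg hτa hgx

theorem isChain_deviations (hC : ∀ h ∈ C, ∀ x, h x = 1 ∨ h x = -1)
    (hVC : ∀ A : Finset X, A.card = 2 → ¬ Shatters C A) (hh₀ : h₀ ∈ C)
    {h : X → ℤ} (hh : h ∈ C) : IsChain (DeviationLe C h₀) {s | h s ≠ h₀ s} := by
  intro s hs x hx hsx
  by_contra hincomp
  simp only [DeviationLe] at hincomp
  push Not at hincomp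
  obtain ⟨⟨u, hu, hux, hus⟩, v, hv, hvs, hvx⟩ := hincomp
  refine hVC {s, x} (Finset.card_pair hsx)
    (shatters_pair_of_agreement_patterns hC hh₀ fun P Q => ?_)
  by_cases hP : P <;> by_cases hQ : Q
  · exact ⟨h₀, hh₀, by simp only [hP], by simp only [hQ]⟩
  · exact ⟨u, hu, iff_of_true hus hP, iff_of_false hux hQ⟩
  · exact ⟨v, hv, iff_of_false hvs hP, iff_of_true hvx hQ⟩
  · exact ⟨h, hh, iff_of_false hs hP, iff_of_false hx hQ⟩

end Chain

section DetectsFlip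

variable {C : Set (X → ℤ)} {h₀ h : X → ℤ} {x y : X}

theorem ne_base_of_flip (hC : ∀ h ∈ C, ∀ x, h x = 1 ∨ h x = -1) (hh : h ∈ C) (hx : h x = h₀ x)
    {l : ℤ} (hl : l = -h x) : l ≠ h₀ x := by
  have := hC h hh x
  omega

/-- `y` detects a flip of the label of `h` at `x`: however `h` is situated in a class `V ⊆ C`,
if the flip leaves the label `h y` realizable, then it drops the score of `y` from `1` to `0`. -/
def DetectsFlip (C : Set (X → ℤ)) (h₀ h : X → ℤ) (x y : X) : Prop :=
  ∀ V ⊆ C, h ∈ V → (∃ h' ∈ Restrict V x (-h x), h' y = h y) →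
    ForcedBelow C h₀ V y ∧ ¬ ForcedBelow C h₀ (Restrict V x (-h x)) y

theorem detectsFlip_of_deviationLe_of_ne (hC : ∀ h ∈ C, ∀ x, h x = 1 ∨ h x = -1) (hh₀ : h₀ ∈ C)
    (hx : h x ≠ h₀ x) (hy : h y ≠ h₀ y) (hxy : DeviationLe C h₀ x y) :
    DetectsFlip C h₀ h x y := by
  rintro V hV hhV ⟨h', ⟨hh'V, hflip⟩, hkeep⟩
  have hdev : h' x ≠ h₀ x := hxy h' (hV hh'V) (hkeep ▸ hy)
  have := hC h (hV hhV) x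
  have := hC h₀ hh₀ x
  omega

theorem detectsFlip_of_deviationLe_of_eq (hC : ∀ h ∈ C, ∀ x, h x = 1 ∨ h x = -1)
    (hx : h x = h₀ x) (hy : h y = h₀ y) (hyx : DeviationLe C h₀ y x) :
    DetectsFlip C h₀ h x y := by
  rintro V hV hhV ⟨h', ⟨hh'V, hflip⟩, hkeep⟩
  have hdev : h' x ≠ h₀ x := ne_base_of_flip hC (hV hhV) hx hflip
  exact absurd (hkeep.trans hy) (hyx h' (hV hh'V) hdev)

theorem detectsFlip_of_not_deviationLe (hC : ∀ h ∈ C, ∀ x, h x = 1 ∨ h x = -1)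
    (hchain : ∀ h' ∈ C, IsChain (DeviationLe C h₀) {s | h' s ≠ h₀ s})
    (hx : h x = h₀ x) (hxy : ¬ DeviationLe C h₀ x y)
    (hseg : ∀ s ∈ {s | h s ≠ h₀ s}, DeviationLe C h₀ s x → DeviationLe C h₀ s y) :
    DetectsFlip C h₀ h x y := by
  rintro V hV hhV ⟨h', ⟨hh'V, hflip⟩, -⟩
  have flip_ne {l : ℤ} : l = -h x → l ≠ h₀ x := ne_base_of_flip hC (hV hhV) hx
  refine ⟨fun s hs => hseg s (hs h hhV) ?_, fun hbelow => hxy (hbelow x fun g hg => flip_ne hg.2)⟩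
  rcases (hchain h' (hV hh'V)).total (hs h' hh'V) (flip_ne hflip) with hsx | hxs
  · exact hsx
  · exact absurd hx (hxs h (hV hhV) (hs h hhV))

theorem detectsFlip_total (hC : ∀ h ∈ C, ∀ x, h x = 1 ∨ h x = -1)
    (hVC : ∀ A : Finset X, A.card = 2 → ¬ Shatters C A) (hh₀ : h₀ ∈ C) (hh : h ∈ C)
    (hside : h x = h₀ x ↔ h y = h₀ y) :
    DetectsFlip C h₀ h x y ∨ DetectsFlip C h₀ h y x := by
  have hchain : ∀ h' ∈ C, IsChain (DeviationLe C h₀) {s | h' s ≠ h₀ s} :=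
    fun _ hh' => isChain_deviations hC hVC hh₀ hh'
  by_cases hx : h x = h₀ x
  · have hy := hside.1 hx
    by_cases hyx : DeviationLe C h₀ y x
    · exact .inl (detectsFlip_of_deviationLe_of_eq hC hx hy hyx)
    by_cases hxy : DeviationLe C h₀ x y
    · exact .inr (detectsFlip_of_deviationLe_of_eq hC hy hx hxy)
    exact (isChain_initialSegments_nested (hchain h hh) x y).imp
      (detectsFlip_of_not_deviationLe hC hchain hx hxy)
      (detectsFlip_of_not_deviationLe hC hchain hy hyx)
  · have hy := mt hside.2 hx
    exact ((hchain h hh).total hx hy).imp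
      (detectsFlip_of_deviationLe_of_ne hC hh₀ hx hy)
      (detectsFlip_of_deviationLe_of_ne hC hh₀ hy hx)

theorem DetectsFlip.score_drop_or_unrealizable {p q : X × ℤ} (hpq : DetectsFlip C h₀ h p.1 q.1)
    (hp : h p.1 = p.2) (hq : h q.1 = q.2) {V : Set (X → ℤ)} (hV : V ⊆ C) (hhV : h ∈ V) :
    1 ≤ forcedScore C h₀ {q} V - forcedScore C h₀ {q} (Restrict V p.1 (-p.2)) ∨
      ¬ ∃ h' ∈ Restrict V p.1 (-p.2), Consistent h' ↑({q} : Finset (X × ℤ)) := by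
  refine or_iff_not_imp_right.2 fun hreal => ?_
  obtain ⟨h', hh', hcons⟩ := not_not.1 hreal
  have hkeep : h' q.1 = h q.1 := (hcons q (by simp)).trans hq.symm
  rw [← hp] at hh' ⊢
  obtain ⟨hbefore, hafter⟩ := hpq V hV hhV ⟨h', hh', hkeep⟩
  simp only [forcedScore_singleton, if_pos hbefore, if_neg hafter, sub_zero, le_refl]

end DetectsFlip

section Goodness

variable {C : Set (X → ℤ)} {h₀ : X → ℤ} {m : ℕ}

theorem robustScore_forcedScore (hC : ∀ h ∈ C, ∀ x, h x = 1 ∨ h x = -1)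
    (hVC : ∀ A : Finset X, A.card = 2 → ¬ Shatters C A) (hh₀ : h₀ ∈ C) (hm : 2 < m) :
    RobustScore C m 1 (forcedScore C h₀) := by
  intro h hh M hM hcons
  obtain ⟨p, hp, q, hq, hpq, hside⟩ : ∃ p ∈ M, ∃ q ∈ M, p ≠ q ∧
      (h p.1 = h₀ p.1) = (h q.1 = h₀ q.1) :=
    Finset.exists_ne_map_eq_of_card_lt_of_maps_to (t := Finset.univ)
      (by rwa [Finset.card_univ, Fintype.card_prop, hM]) fun _ _ => Finset.mem_univ _
  wlog hdet : DetectsFlip C h₀ h p.1 q.1 generalizing p q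
  · exact this q hq p hp hpq.symm hside.symm
      ((detectsFlip_total hC hVC hh₀ hh (iff_of_eq hside)).resolve_left hdet)
  refine ⟨{q}, Finset.singleton_subset_iff.2 hq, Finset.card_singleton q, p, hp,
    Finset.notMem_singleton.2 hpq, fun A hA _ => ?_⟩
  exact hdet.score_drop_or_unrealizable (hcons p hp) (hcons q hq) (fun _ hg => hg.1) ⟨hh, hA⟩

theorem isGood_forcedScore (hC : ∀ h ∈ C, ∀ x, h x = 1 ∨ h x = -1)
    (hVC : ∀ A : Finset X, A.card = 2 → ¬ Shatters C A) (hh₀ : h₀ ∈ C) (hm : 2 < m) :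
    IsGood C m 1 1 (forcedScore C h₀) :=
  ⟨fun _ _ _ => ⟨forcedScore_nonneg, forcedScore_le_one⟩, monotoneScore_forcedScore C h₀ 1,
    robustScore_forcedScore hC hVC hh₀ hm⟩

end Goodness

/-- Every nonempty concept class of VC dimension at most `1` (no two-element subset is
shattered) admits a `(3,1,1)`-good function. -/
theorem stmt8 {X : Type*} (C : Set (X → ℤ)) (hne : C.Nonempty)
    (hpm : ∀ h ∈ C, ∀ x : X, h x = 1 ∨ h x = -1)
    (hVC : ∀ A : Finset X, A.card = 2 → ¬ Shatters C A) :
    ∃ f : Finset (X × ℤ) → Set (X → ℤ) → ℝ, IsGood C 3 1 1 f := by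
  obtain ⟨h₀, hh₀⟩ := hne
  exact ⟨forcedScore C h₀, isGood_forcedScore hpm hVC hh₀ (by norm_num)⟩
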